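/- arXiv:2111.14687 — 2 statements merged into one kernel-verified Lean document; each statement's English description precedes it below -/
import Mathlib

section
/- Let p, q, α be real numbers with e^{iα} ≠ −1, e^{ip} ≠ e^{iq}, e^{i(q−p)} ≠ −1, sin(q−p) ≠ 0, sin(q/2) ≠ 0 and cos(q/2 − p) ≠ 0. Then 4e^{iα}/(1+e^{iα})² = (1−e^{iq})(e^{ip}+e^{i(q−p)}) / ((e^{ip}−e^{iq})(1+e^{i(q−p)})) holds if and only if cos²(α/2) = sin(q−p)/(2·sin(q/2)·cos(q/2−p)). -/
/-!
The cross-ratio of four points `e^{ia}, e^{ib}, e^{ic}, e^{id}` is a quotient of sines of half the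
angle differences, because `e^{ia} - e^{ib} = 2i sin((a - b)/2) e^{i(a + b)/2}` and the phases
cancel. The angles `0, α, π, α + π` give `1/cos²(α/2)`, and the angles `0, p, q, q - p + π` give
`2 sin(q/2) cos(q/2 - p)/sin(q - p)`.
-/

open Complex
open scoped Real

/-- The cross-ratio `(a, b; c, d)` of four points of a field, normalised by
`(∞, 0; 1, d) = d`: the Möbius invariant of four points that the condition compares on both sides.
Division by zero makes it `0`, not `∞`, when `b = c` or `a = d`. -/
def crossRatio {K : Type*} [Field K] (a b c d : K) : K :=
  (a - c) * (b - d) / ((b - c) * (a - d))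

theorem exp_I_mul_sub_exp_I_mul (a b : ℂ) :
    exp (I * a) - exp (I * b) = 2 * I * sin ((a - b) / 2) * exp (I * ((a + b) / 2)) := by
  have two_I_mul_sin :
      2 * I * sin ((a - b) / 2) = exp ((a - b) / 2 * I) - exp (-((a - b) / 2) * I) := by
    rw [mul_right_comm, two_sin, mul_assoc, I_mul_I, mul_neg_one, neg_sub]
  rw [two_I_mul_sin, sub_mul, ← exp_add, ← exp_add]
  ring_nf

theorem crossRatio_exp_I_mul (a b c d : ℂ) :
    crossRatio (exp (I * a)) (exp (I * b)) (exp (I * c)) (exp (I * d))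
      = sin ((a - c) / 2) * sin ((b - d) / 2) / (sin ((b - c) / 2) * sin ((a - d) / 2)) := by
  have phase_eq : exp (I * ((a + c) / 2)) * exp (I * ((b + d) / 2))
      = exp (I * ((b + c) / 2)) * exp (I * ((a + d) / 2)) := by
    rw [← exp_add, ← exp_add]
    ring_nf
  have factor_ne_zero :
      (2 * I) ^ 2 * (exp (I * ((b + c) / 2)) * exp (I * ((a + d) / 2))) ≠ 0 := by
    simp [exp_ne_zero]
  simp only [crossRatio, exp_I_mul_sub_exp_I_mul]
  rw [← mul_div_mul_left _ (sin ((b - c) / 2) * sin ((a - d) / 2)) factor_ne_zero]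
  congr 1
  · linear_combination (2 * I) ^ 2 * sin ((a - c) / 2) * sin ((b - d) / 2) * phase_eq
  · ring

theorem exp_I_mul_add_pi (a : ℂ) : exp (I * (a + π)) = -exp (I * a) := by
  rw [mul_add, mul_comm I (π : ℂ), exp_add, exp_pi_mul_I, mul_neg_one]

theorem crossRatio_one_exp_neg_one_neg_exp (α : ℂ) :
    crossRatio 1 (exp (I * α)) (-1) (-exp (I * α)) = 1 / cos (α / 2) ^ 2 := by
  have crossRatio_eq := crossRatio_exp_I_mul 0 α (0 + π) (α + π)
  rw [exp_I_mul_add_pi, exp_I_mul_add_pi, mul_zero, exp_zero] at crossRatio_eq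
  rw [crossRatio_eq, show (0 - (0 + π) : ℂ) / 2 = -(π / 2) by ring,
    show (α - (α + π)) / 2 = -(π / 2) by ring,
    show (α - (0 + π)) / 2 = α / 2 - π / 2 by ring,
    show (0 - (α + π)) / 2 = -(α / 2 + π / 2) by ring,
    sin_neg, sin_neg, sin_pi_div_two, sin_sub_pi_div_two, sin_add_pi_div_two]
  ring

theorem crossRatio_one_exp_exp_neg_exp_sub (p q : ℂ) :
    crossRatio 1 (exp (I * p)) (exp (I * q)) (-exp (I * (q - p)))
      = 2 * sin (q / 2) * cos (q / 2 - p) / sin (q - p) := by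
  have crossRatio_eq := crossRatio_exp_I_mul 0 p q (q - p + π)
  have sin_sub_eq : sin (q - p) = 2 * sin ((q - p) / 2) * cos ((q - p) / 2) := by
    rw [← sin_two_mul, mul_div_cancel₀ _ two_ne_zero]
  rw [exp_I_mul_add_pi, mul_zero, exp_zero] at crossRatio_eq
  rw [crossRatio_eq, show (0 - q) / 2 = -(q / 2) by ring,
    show (p - (q - p + π)) / 2 = -(q / 2 - p + π / 2) by ring,
    show (p - q) / 2 = -((q - p) / 2) by ring,
    show (0 - (q - p + π)) / 2 = -((q - p) / 2 + π / 2) by ring]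
  simp only [sin_neg, sin_add_pi_div_two, neg_mul_neg]
  rw [sin_sub_eq, mul_assoc, mul_assoc, mul_div_mul_left _ _ two_ne_zero]

theorem exp_I_mul_eq_neg_one_iff {a : ℂ} : exp (I * a) = -1 ↔ cos (a / 2) = 0 := by
  have exp_add_one : exp (I * a) + 1 = 2 * cos (a / 2) * exp (a / 2 * I) := by
    rw [two_cos, add_mul, ← exp_add, ← exp_add, neg_mul, neg_add_cancel, exp_zero, ← add_mul,
      add_halves, mul_comm I]
  rw [← add_eq_zero_iff_eq_neg, exp_add_one]
  simp [exp_ne_zero]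

theorem crossratio_condition_iff_general (p q α : ℂ) (hα : exp (I * α) ≠ -1)
    (hqp : sin (q - p) ≠ 0) (hq : sin (q / 2) ≠ 0) (hcos : cos (q / 2 - p) ≠ 0) :
    4 * exp (I * α) / (1 + exp (I * α)) ^ 2
        = (1 - exp (I * q)) * (exp (I * p) + exp (I * (q - p)))
          / ((exp (I * p) - exp (I * q)) * (1 + exp (I * (q - p))))
    ↔ cos (α / 2) ^ 2 = sin (q - p) / (2 * sin (q / 2) * cos (q / 2 - p)) := by
  have source_eq : 4 * exp (I * α) / (1 + exp (I * α)) ^ 2 = 1 / cos (α / 2) ^ 2 := by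
    rw [← crossRatio_one_exp_neg_one_neg_exp, crossRatio]
    ring_nf
  have target_eq : (1 - exp (I * q)) * (exp (I * p) + exp (I * (q - p)))
      / ((exp (I * p) - exp (I * q)) * (1 + exp (I * (q - p))))
      = 2 * sin (q / 2) * cos (q / 2 - p) / sin (q - p) := by
    rw [← crossRatio_one_exp_exp_neg_exp_sub, crossRatio, sub_neg_eq_add, sub_neg_eq_add]
  have cos_half_ne_zero : cos (α / 2) ≠ 0 := exp_I_mul_eq_neg_one_iff.not.mp hα
  rw [source_eq, target_eq, div_eq_div_iff (pow_ne_zero 2 cos_half_ne_zero) hqp,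
    eq_div_iff (mul_ne_zero (mul_ne_zero two_ne_zero hq) hcos), one_mul, eq_comm, mul_comm]

/-- The cross-ratio condition determining the parameter `α` of the Möbius transformation
sending `1, e^{iα}, -1, -e^{iα}` to `1, e^{ip}, e^{iq}, -e^{i(q-p)}` is equivalent to
`cos²(α/2) = sin(q-p)/(2 sin(q/2) cos(q/2-p))`. -/
theorem crossratio_condition_iff (p q α : ℝ)
    (h1 : Complex.exp (Complex.I * α) ≠ -1)
    (h2 : Complex.exp (Complex.I * p) ≠ Complex.exp (Complex.I * q))
    (h3 : Complex.exp (Complex.I * (q - p)) ≠ -1)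
    (h4 : Real.sin (q - p) ≠ 0) (h5 : Real.sin (q / 2) ≠ 0) (h6 : Real.cos (q / 2 - p) ≠ 0) :
    4 * Complex.exp (Complex.I * α) / (1 + Complex.exp (Complex.I * α)) ^ 2
        = (1 - Complex.exp (Complex.I * q))
            * (Complex.exp (Complex.I * p) + Complex.exp (Complex.I * (q - p)))
          / ((Complex.exp (Complex.I * p) - Complex.exp (Complex.I * q))
            * (1 + Complex.exp (Complex.I * (q - p))))
    ↔ Real.cos (α / 2) ^ 2 = Real.sin (q - p) / (2 * Real.sin (q / 2) * Real.cos (q / 2 - p)) := by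
  exact_mod_cast
    crossratio_condition_iff_general p q α h1 (mod_cast h4) (mod_cast h5) (mod_cast h6)
end

section
/- Let p, q be real with sin p > 0, sin(q−p) > 0, sin(q/2) ≠ 0, cos q ≠ 1 and sin p·sin(q−p) < 1. Define a = (cos(q−p) − cos p − i·sin q) / (1 − cos q + 2√(sin p·sin(q−p)) + i·(sin(q−p) − sin p)). Then a = √((1 − √(sin p·sin(q−p)))/(1 + √(sin p·sin(q−p)))) · (cos δ + i·sin δ), where cos δ = −sin(q/2 − p)/(sin(q/2)·√(1 − sin(q−p)·sin p)) and sin δ = −cos(q/2)·√(sin(q−p)·sin p)/(sin(q/2)·√(1 − sin(q−p)·sin p)). -/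
/-!
Put `s = √(sin p sin(q - p))`, so that `s² = sin²(q/2) - sin²(q/2 - p)`. The numerator of `a` is
`-2 sin(q/2) (sin(q/2 - p) + i cos(q/2))` and its denominator is
`2 (sin²(q/2) + s + i cos(q/2) sin(q/2 - p))`. Multiplying that last factor by
`sin(q/2 - p) + i s cos(q/2)` gives a real multiple of `sin(q/2 - p) + i cos(q/2)`, so the quotient
collapses to `-(sin(q/2 - p) + i s cos(q/2)) / (sin(q/2) (1 + s))`, whose phase and modulus can be
read off.
-/

section

open Real
open Complex (I)

lemma sqrt_one_sub_div_one_add {s : ℝ} (hs : -1 < s) :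
    √((1 - s) / (1 + s)) = √(1 - s ^ 2) / (1 + s) := by
  have h_pos : 0 < 1 + s := by linarith
  calc √((1 - s) / (1 + s)) = √((1 - s ^ 2) / (1 + s) ^ 2) := by
        congr 1
        field_simp
        ring
    _ = √(1 - s ^ 2) / (1 + s) := by rw [sqrt_div' _ (sq_nonneg _), sqrt_sq h_pos.le]

lemma add_mul_mul_sq_add_add_mul_eq {R : Type*} [CommRing R] {i u c v s : R}
    (hi : i ^ 2 = -1) (huc : u ^ 2 + c ^ 2 = 1) (hs : s ^ 2 = u ^ 2 - v ^ 2) :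
    (v + i * (s * c)) * (u ^ 2 + s + i * (c * v)) = u ^ 2 * (1 + s) * (v + i * c) := by
  linear_combination s * c ^ 2 * v * hi - v * s * huc + i * c * hs

lemma sin_sub_mul_sin_add (x y : ℝ) : sin (x - y) * sin (x + y) = sin x ^ 2 - sin y ^ 2 := by
  rw [sin_sub, sin_add]
  linear_combination sin x ^ 2 * sin_sq_add_cos_sq y - sin y ^ 2 * sin_sq_add_cos_sq x

lemma sin_mul_sin_sub (p q : ℝ) :
    sin p * sin (q - p) = sin (q / 2) ^ 2 - sin (q / 2 - p) ^ 2 := by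
  rw [← sin_sub_mul_sin_add, sub_sub_cancel, ← add_sub_assoc, add_halves]

lemma cos_sub_cos_sub_I_mul_sin (p q : ℝ) :
    ((cos (q - p) - cos p : ℝ) : ℂ) - I * (sin q : ℂ) =
      -2 * (sin (q / 2) : ℂ) * ((sin (q / 2 - p) : ℂ) + I * (cos (q / 2) : ℂ)) := by
  have h_re : cos (q - p) - cos p = -2 * sin (q / 2) * sin (q / 2 - p) := by
    rw [cos_sub_cos]
    ring_nf
  have h_im : sin q = 2 * sin (q / 2) * cos (q / 2) := by
    rw [← sin_two_mul, mul_div_cancel₀ q two_ne_zero]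
  rw [h_re, h_im]
  simp only [Complex.ofReal_mul, Complex.ofReal_neg, Complex.ofReal_ofNat]
  ring

lemma one_sub_cos_add_I_mul_sin_sub_sin (p q s : ℝ) :
    ((1 - cos q + 2 * s : ℝ) : ℂ) + I * ((sin (q - p) - sin p : ℝ) : ℂ) =
      2 * ((sin (q / 2) : ℂ) ^ 2 + s + I * (cos (q / 2) * sin (q / 2 - p))) := by
  have h_re : 1 - cos q = 2 * sin (q / 2) ^ 2 := by
    rw [sin_sq_eq_half_sub, mul_div_cancel₀ q two_ne_zero]
    ring
  have h_im : sin (q - p) - sin p = 2 * sin (q / 2 - p) * cos (q / 2) := by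
    rw [sin_sub_sin]
    ring_nf
  rw [h_re, h_im]
  simp only [Complex.ofReal_add, Complex.ofReal_mul, Complex.ofReal_pow, Complex.ofReal_ofNat]
  ring

lemma ofReal_add_I_mul_ne_zero {x : ℝ} (hx : x ≠ 0) (y : ℝ) : (x : ℂ) + I * y ≠ 0 := by
  intro h_zero
  have h_re : x = 0 := by
    simpa only [Complex.add_re, Complex.ofReal_re, Complex.re_mul_ofReal, Complex.I_re, zero_mul,
      add_zero, Complex.zero_re] using congrArg Complex.re h_zero
  exact hx h_re

lemma div_eq_neg_div_of_sq_eq_sin_mul_sin {p q s : ℝ} (hsin : sin (q / 2) ≠ 0) (hs₀ : 0 ≤ s)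
    (hs : s ^ 2 = sin p * sin (q - p)) :
    (((cos (q - p) - cos p : ℝ) : ℂ) - I * (sin q : ℂ)) /
        (((1 - cos q + 2 * s : ℝ) : ℂ) + I * ((sin (q - p) - sin p : ℝ) : ℂ)) =
      -((sin (q / 2 - p) : ℂ) + I * (s * cos (q / 2))) / (sin (q / 2) * (1 + s)) := by
  rw [cos_sub_cos_sub_I_mul_sin, one_sub_cos_add_I_mul_sin_sub_sin]
  have h_sin : (sin (q / 2) : ℂ) ≠ 0 := mod_cast hsin
  have h_one_add : (1 + s : ℂ) ≠ 0 := mod_cast (by positivity : 1 + s ≠ 0)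
  have h_re : sin (q / 2) ^ 2 + s ≠ 0 := by positivity
  have h_factor : (sin (q / 2) : ℂ) ^ 2 + s + I * (cos (q / 2) * sin (q / 2 - p)) ≠ 0 :=
    mod_cast ofReal_add_I_mul_ne_zero h_re (cos (q / 2) * sin (q / 2 - p))
  have h_sq : (s : ℂ) ^ 2 = (sin (q / 2) : ℂ) ^ 2 - (sin (q / 2 - p) : ℂ) ^ 2 :=
    mod_cast hs.trans (sin_mul_sin_sub p q)
  have h_pyth : (sin (q / 2) : ℂ) ^ 2 + (cos (q / 2) : ℂ) ^ 2 = 1 :=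
    mod_cast sin_sq_add_cos_sq (q / 2)
  rw [div_eq_div_iff (mul_ne_zero two_ne_zero h_factor) (mul_ne_zero h_sin h_one_add)]
  linear_combination 2 * add_mul_mul_sq_add_add_mul_eq Complex.I_sq h_pyth h_sq

theorem a_polar_decomposition_general (p q δ : ℝ)
    (hnonneg : 0 ≤ sin p * sin (q - p)) (hlt : sin p * sin (q - p) < 1)
    (hsinq2 : sin (q / 2) ≠ 0) (a : ℂ)
    (ha : a = (((cos (q - p) - cos p : ℝ) : ℂ) - I * (sin q : ℂ)) /
      (((1 - cos q + 2 * √(sin p * sin (q - p)) : ℝ) : ℂ)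
        + I * ((sin (q - p) - sin p : ℝ) : ℂ)))
    (hcosδ : cos δ = -sin (q / 2 - p) / (sin (q / 2) * √(1 - sin (q - p) * sin p)))
    (hsinδ : sin δ = -cos (q / 2) * √(sin (q - p) * sin p)
      / (sin (q / 2) * √(1 - sin (q - p) * sin p))) :
    a = ((√((1 - √(sin p * sin (q - p))) / (1 + √(sin p * sin (q - p)))) : ℝ) : ℂ)
      * ((cos δ : ℂ) + I * (sin δ : ℂ)) := by
  have h_neg_one_lt : -1 < √(sin p * sin (q - p)) := neg_one_lt_zero.trans_le (sqrt_nonneg _)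
  have h_modulus := sqrt_one_sub_div_one_add h_neg_one_lt
  have h_quotient := div_eq_neg_div_of_sq_eq_sin_mul_sin hsinq2 (sqrt_nonneg _) (sq_sqrt hnonneg)
  rw [sq_sqrt hnonneg] at h_modulus
  rw [ha, h_quotient, h_modulus, hcosδ, hsinδ, mul_comm (sin (q - p))]
  have h_sqrt : (√(1 - sin p * sin (q - p)) : ℂ) ≠ 0 :=
    mod_cast (sqrt_pos.2 (sub_pos.2 hlt)).ne'
  simp only [Complex.ofReal_div, Complex.ofReal_mul, Complex.ofReal_neg, Complex.ofReal_add,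
    Complex.ofReal_one]
  field_simp
  ring

end

/-- Polar decomposition of the complex parameter `a`: if `cos δ` and `sin δ` take the
displayed values, then `a = √((1-√(sin p sin(q-p)))/(1+√(sin p sin(q-p)))) (cos δ + i sin δ)`. -/
theorem a_polar_decomposition (p q δ : ℝ)
    (hsinp : 0 < Real.sin p) (hsinqp : 0 < Real.sin (q - p))
    (hsinq2 : Real.sin (q / 2) ≠ 0) (hq : Real.cos q ≠ 1)
    (hlt : Real.sin p * Real.sin (q - p) < 1)
    (a : ℂ)
    (ha : a = (((Real.cos (q - p) - Real.cos p : ℝ) : ℂ) - Complex.I * (Real.sin q : ℂ)) /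
      (((1 - Real.cos q + 2 * Real.sqrt (Real.sin p * Real.sin (q - p)) : ℝ) : ℂ)
        + Complex.I * ((Real.sin (q - p) - Real.sin p : ℝ) : ℂ)))
    (hcosδ : Real.cos δ = -Real.sin (q / 2 - p)
      / (Real.sin (q / 2) * Real.sqrt (1 - Real.sin (q - p) * Real.sin p)))
    (hsinδ : Real.sin δ = -Real.cos (q / 2) * Real.sqrt (Real.sin (q - p) * Real.sin p)
      / (Real.sin (q / 2) * Real.sqrt (1 - Real.sin (q - p) * Real.sin p))) :
    a = ((Real.sqrt ((1 - Real.sqrt (Real.sin p * Real.sin (q - p)))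
          / (1 + Real.sqrt (Real.sin p * Real.sin (q - p)))) : ℝ) : ℂ)
        * ((Real.cos δ : ℂ) + Complex.I * (Real.sin δ : ℂ)) := by
  exact a_polar_decomposition_general p q δ (mul_pos hsinp hsinqp).le hlt hsinq2 a ha hcosδ hsinδ
end
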